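/- Under the polynomial parametric setting and the Archimedean assumption, assume K_y is nonempty for every y ∈ Y and that for φ-almost all y ∈ Y the value J(y) is attained at a unique minimizer x*(y). For each i ≥ i_0 let z^i be a nearly optimal feasible solution of the i-th semidefinite relaxation with L_{z^i}(f) ≤ ρ_i + 1/i. Then there is a Borel measurable mapping g : Y → ℝ^n with g(y) ∈ K_y and J(y) = f(g(y),y) for every y ∈ Y, such that for every α ∈ ℕ^n and β ∈ ℕ^p, lim_{i→∞} z^i_{αβ} = ∫_Y y^β g(y)^α dφ(y). In particular, for every k = 1, …, n and every β ∈ ℕ^p, lim_{i→∞} z^i_{e(k)β} = ∫_Y y^β g_k(y) dφ(y), where e(k) ∈ ℕ^n is the k-th unit multi-index. -/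

import Mathlib

open MeasureTheory MvPolynomial Filter Topology Set

noncomputable section

/-- The Riesz-like linear functional `L_z` associated with a double-indexed real
sequence `z = (z_{αβ})`, sending `Σ f_{αβ} x^α y^β` to `Σ f_{αβ} z_{αβ}`. -/
def Lz (n p : ℕ) (z : (Fin n → ℕ) → (Fin p → ℕ) → ℝ)
    (q : MvPolynomial (Fin n ⊕ Fin p) ℝ) : ℝ :=
  ∑ d ∈ q.support, q.coeff d * z (fun k => d (Sum.inl k)) (fun l => d (Sum.inr l))

/-- Every monomial `x^α y^β` of `q` satisfies `|α| ≤ i` and `|β| ≤ i`, i.e. `q` is in the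
span of the monomial basis indexing the moment matrix `M_i`. -/
def DegOK (n p : ℕ) (i : ℕ) (q : MvPolynomial (Fin n ⊕ Fin p) ℝ) : Prop :=
  ∀ d ∈ q.support, (∑ k, d (Sum.inl k)) ≤ i ∧ (∑ l, d (Sum.inr l)) ≤ i

/-- `⌈deg h / 2⌉`. -/
def halfDeg {σ : Type*} (h : MvPolynomial σ ℝ) : ℕ := (h.totalDegree + 1) / 2

/-- Feasibility of the sequence `z` for the `i`-th moment relaxation:
`M_i(z) ⪰ 0`, `M_{i-v_j}(h_j z) ⪰ 0` for all `j`, and `L_z(y^β) = γ_β` for `|β| ≤ 2i`.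
Positive semidefiniteness of the moment (resp. localizing) matrix is expressed through
nonnegativity of the associated quadratic forms `c ↦ cᵀ M_i(z) c = L_z(q²)`
(resp. `cᵀ M_{i-v_j}(h_j z) c = L_z(h_j q²)`), `q` ranging over the polynomials spanned
by the monomials indexing the matrix. -/
def RelaxFeasible (n p : ℕ) {ι : Type*} [Fintype ι]
    (H : ι → MvPolynomial (Fin n ⊕ Fin p) ℝ)
    (γ : (Fin p → ℕ) → ℝ) (i : ℕ)
    (z : (Fin n → ℕ) → (Fin p → ℕ) → ℝ) : Prop :=
  (∀ q, DegOK n p i q → 0 ≤ Lz n p z (q ^ 2)) ∧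
  (∀ j, ∀ q, DegOK n p (i - halfDeg (H j)) q → 0 ≤ Lz n p z (H j * q ^ 2)) ∧
  (∀ β : Fin p → ℕ, (∑ l, β l) ≤ 2 * i → z (fun _ => 0) β = γ β)

/-- Optimal value `ρ_i` of the `i`-th (primal) semidefinite relaxation. -/
def rhoSDP (n p : ℕ) {ι : Type*} [Fintype ι]
    (H : ι → MvPolynomial (Fin n ⊕ Fin p) ℝ)
    (γ : (Fin p → ℕ) → ℝ) (f : MvPolynomial (Fin n ⊕ Fin p) ℝ) (i : ℕ) : ℝ :=
  sInf {r | ∃ z, RelaxFeasible n p H γ i z ∧ r = Lz n p z f}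

/-- Evaluation of a polynomial in `(x, y)` at a point of `ℝ^n × ℝ^p`. -/
def evalXY (n p : ℕ) (q : MvPolynomial (Fin n ⊕ Fin p) ℝ)
    (w : (Fin n → ℝ) × (Fin p → ℝ)) : ℝ :=
  eval (Sum.elim w.1 w.2) q

/-- Optimal value `ρ` of the infinite-dimensional problem `P`: the infimum of `∫_K f dμ`
over finite Borel measures `μ` on `K` whose marginal on `ℝ^p` is `φ`. -/
def rhoP (n p : ℕ) (f : MvPolynomial (Fin n ⊕ Fin p) ℝ)
    (K : Set ((Fin n → ℝ) × (Fin p → ℝ))) (φ : Measure (Fin p → ℝ)) : ℝ :=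
  sInf {r | ∃ μ : Measure ((Fin n → ℝ) × (Fin p → ℝ)),
    IsFiniteMeasure μ ∧ μ Kᶜ = 0 ∧ μ.map Prod.snd = φ ∧
    r = ∫ w in K, evalXY n p f w ∂μ}

/-- `i₀ := max(⌈deg f / 2⌉, max_j ⌈deg h_j / 2⌉)`. -/
def iZero (n p : ℕ) {ι : Type*} [Fintype ι]
    (H : ι → MvPolynomial (Fin n ⊕ Fin p) ℝ)
    (f : MvPolynomial (Fin n ⊕ Fin p) ℝ) : ℕ :=
  max (halfDeg f) (Finset.univ.sup fun j => halfDeg (H j))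

/-- The Archimedean (Putinar) assumption for the family `H`: for some `N`,
`N - ‖(x,y)‖²` lies in the quadratic module generated by the `H j`. -/
def ArchimedeanQM (n p : ℕ) {ι : Type*} [Fintype ι]
    (H : ι → MvPolynomial (Fin n ⊕ Fin p) ℝ) : Prop :=
  ∃ (N : ℝ) (σ0 : MvPolynomial (Fin n ⊕ Fin p) ℝ)
    (σ : ι → MvPolynomial (Fin n ⊕ Fin p) ℝ),
    IsSumSq σ0 ∧ (∀ j, IsSumSq (σ j)) ∧
    C N - (∑ i : Fin n ⊕ Fin p, X i ^ 2) = σ0 + ∑ j, σ j * H j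

/-! Pass to the limit of the functionals `L_{z^i}` along an arbitrary ultrafilter. The limit is
nonnegative on the archimedean quadratic module generated by the constraints, so Putinar's
Positivstellensatz and the Riesz–Haviland theorem represent it by a measure `μ` on `K`. The marginal
of `μ` on the parameters has the moments of `φ`, and on compact sets moments determine measures, so
it is `φ`. A measurable selection `g` of minimizers, obtained by minimizing one coordinate after
another, gives a competitor: the image `ν` of `φ` under `y ↦ (g y, y)`. Near optimality yields
`∫ f dμ ≤ ∫ f dν`, whereas `f` is pointwise at least its fibrewise minimum; hence `μ` is carried by
the minimizers, and as these are almost surely unique, `μ = ν`. Since all limits agree, the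
functionals converge. -/

section OrderUnit

variable {E : Type*} [AddCommGroup E] [Module ℝ E]

/-- `u` is an order unit of the cone `M`: every vector is dominated by a multiple of `u`. A
quadratic module is archimedean exactly when `1` is an order unit of it. -/
def IsOrderUnit (M : PointedCone ℝ E) (u : E) : Prop :=
  ∀ a, ∃ k : ℝ, k • u - a ∈ M

theorem IsOrderUnit.mono {M M' : PointedCone ℝ E} {u : E} (hu : IsOrderUnit M u) (h : M ≤ M') :
    IsOrderUnit M' u :=
  fun a => (hu a).imp fun _ hk => h hk

theorem IsOrderUnit.exists_linearMap_nonneg {M : PointedCone ℝ E} {u : E}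
    (hu : IsOrderUnit M u) (hneg : -u ∉ M) :
    ∃ L : E →ₗ[ℝ] ℝ, L u = 1 ∧ ∀ a ∈ M, 0 ≤ L a := by
  have hu0 : u ≠ 0 := by
    rintro rfl
    exact hneg (by simp only [neg_zero, M.zero_mem])
  let ℓ : E →ₗ.[ℝ] ℝ := LinearPMap.mkSpanSingleton u 1 hu0
  have hℓ (c : ℝ) (hc : c • u ∈ ℓ.domain) : ℓ ⟨c • u, hc⟩ = c :=
    (LinearPMap.mkSpanSingleton'_apply u (1 : ℝ) _ c hc).trans (mul_one c)
  have hspan (c : ℝ) : c • u ∈ ℓ.domain :=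
    Submodule.smul_mem _ c (Submodule.mem_span_singleton_self u)
  obtain ⟨L, hLℓ, hL⟩ := riesz_extension M ℓ
    (by
      rintro ⟨v, hv⟩ hvM
      obtain ⟨c, rfl⟩ := Submodule.mem_span_singleton.1 hv
      rw [hℓ c hv]
      by_contra! hc
      refine hneg ?_
      have := M.smul_mem (inv_nonneg.2 (neg_pos.2 hc).le) hvM
      rwa [smul_smul, inv_neg, neg_mul, inv_mul_cancel₀ hc.ne, neg_one_smul] at this)
    (by
      intro a
      obtain ⟨k, hk⟩ := hu (-a)
      exact ⟨⟨k • u, hspan k⟩, by simpa only [sub_neg_eq_add] using hk⟩)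
  refine ⟨L, ?_, hL⟩
  simpa only [one_smul] using (hLℓ ⟨(1 : ℝ) • u, hspan 1⟩).trans (hℓ 1 _)

end OrderUnit

section QuadraticModule

variable {A : Type*} [CommRing A] [Algebra ℝ A]

/-- A quadratic module of a commutative real algebra, seen as a cone: it contains `1` and is stable
under multiplication by squares. -/
structure IsQuadraticModule (M : PointedCone ℝ A) : Prop where
  one_mem : 1 ∈ M
  sq_mul_mem (b : A) {a : A} (ha : a ∈ M) : b ^ 2 * a ∈ M

/-- The cone `M + Σ a`, where `Σ` denotes the sums of squares. If `M` is a quadratic module, it is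
the quadratic module generated by `M` and `a`. -/
def adjoinSumSq (M : PointedCone ℝ A) (a : A) : PointedCone ℝ A where
  carrier := {x | ∃ m ∈ M, ∃ s, IsSumSq s ∧ x = m + s * a}
  zero_mem' := ⟨0, M.zero_mem, 0, IsSumSq.zero, by ring⟩
  add_mem' := by
    rintro _ _ ⟨m, hm, s, hs, rfl⟩ ⟨m', hm', s', hs', rfl⟩
    exact ⟨m + m', M.add_mem hm hm', s + s', hs.add hs', by ring⟩
  smul_mem' := by
    rintro ⟨c, hc⟩ _ ⟨m, hm, s, hs, rfl⟩
    have hsq : IsSumSq (algebraMap ℝ A c) := by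
      rw [← Real.mul_self_sqrt hc, map_mul]
      exact IsSumSq.mul_self _
    exact ⟨c • m, M.smul_mem hc hm, algebraMap ℝ A c * s, hsq.mul hs, by
      rw [Nonneg.mk_smul, smul_add, ← smul_mul_assoc, Algebra.smul_def c s]⟩

theorem le_adjoinSumSq (M : PointedCone ℝ A) (a : A) : M ≤ adjoinSumSq M a :=
  fun m hm => ⟨m, hm, 0, IsSumSq.zero, by ring⟩

theorem self_mem_adjoinSumSq (M : PointedCone ℝ A) (a : A) : a ∈ adjoinSumSq M a :=
  ⟨0, M.zero_mem, 1, IsSumSq.one, by ring⟩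

namespace IsQuadraticModule

variable {M : PointedCone ℝ A}

theorem sumSq_mul_mem (hM : IsQuadraticModule M) {s a : A} (hs : IsSumSq s) (ha : a ∈ M) :
    s * a ∈ M := by
  induction hs with
  | zero => simp only [zero_mul, M.zero_mem]
  | sq_add b _ ih =>
    rw [add_mul, ← pow_two]
    exact M.add_mem (hM.sq_mul_mem b ha) ih

theorem sumSq_mem (hM : IsQuadraticModule M) {s : A} (hs : IsSumSq s) : s ∈ M := by
  simpa only [mul_one] using hM.sumSq_mul_mem hs hM.one_mem

theorem smul_one_mem (hM : IsQuadraticModule M) {r : ℝ} (hr : 0 ≤ r) : r • (1 : A) ∈ M :=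
  M.smul_mem hr hM.one_mem

theorem smul_one_sub_mem_of_le (hM : IsQuadraticModule M) {a : A} {r t : ℝ} (hrt : r ≤ t)
    (ha : r • (1 : A) - a ∈ M) : t • (1 : A) - a ∈ M := by
  convert M.add_mem ha (hM.smul_one_mem (sub_nonneg.2 hrt)) using 1
  module

variable (hM : IsQuadraticModule M)
include hM

theorem adjoin (a : A) : IsQuadraticModule (adjoinSumSq M a) where
  one_mem := ⟨1, hM.one_mem, 0, IsSumSq.zero, by ring⟩
  sq_mul_mem := by
    rintro b _ ⟨m, hm, s, hs, rfl⟩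
    exact ⟨b ^ 2 * m, hM.sq_mul_mem b hm, b * b * s, (IsSumSq.mul_self b).mul hs, by ring⟩

theorem mul_mem_of_mem_of_neg_mem {x : A} (hx : x ∈ M) (hx' : -x ∈ M) (a : A) : x * a ∈ M := by
  convert M.smul_mem (show (0 : ℝ) ≤ 1 / 4 by norm_num)
    (M.add_mem (hM.sq_mul_mem (a + 1) hx) (hM.sq_mul_mem (a - 1) hx')) using 1
  algebra

theorem mem_or_neg_mem_of_maximal (hneg : (-1 : A) ∉ M)
    (hmax : ∀ Q : PointedCone ℝ A, IsQuadraticModule Q → (-1 : A) ∉ Q → M ≤ Q → Q ≤ M) (a : A) :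
    a ∈ M ∨ -a ∈ M := by
  by_contra! ⟨ha, ha'⟩
  have neg_one_mem {b : A} (hb : b ∉ M) : (-1 : A) ∈ adjoinSumSq M b := by
    by_contra hc
    exact hb (hmax _ (hM.adjoin b) hc (le_adjoinSumSq M b) (self_mem_adjoinSumSq M b))
  obtain ⟨m, hm, s, hs, hms⟩ := neg_one_mem ha
  obtain ⟨m', hm', t, ht, hmt⟩ := neg_one_mem ha'
  have hs' : -s ∈ M := by
    have : -s = t + s * m' + t * m := by linear_combination s * hmt + t * hms
    rw [this]
    exact M.add_mem (M.add_mem (hM.sumSq_mem ht) (hM.sumSq_mul_mem hs hm'))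
      (hM.sumSq_mul_mem ht hm)
  refine hneg ?_
  rw [hms]
  exact M.add_mem hm (hM.mul_mem_of_mem_of_neg_mem (hM.sumSq_mem hs) hs' a)

theorem exists_le_total (hneg : (-1 : A) ∉ M) :
    ∃ Q : PointedCone ℝ A, M ≤ Q ∧ IsQuadraticModule Q ∧ (-1 : A) ∉ Q ∧ ∀ a, a ∈ Q ∨ -a ∈ Q := by
  obtain ⟨Q, hMQ, hQ⟩ := zorn_le_nonempty₀
    {Q : PointedCone ℝ A | IsQuadraticModule Q ∧ (-1 : A) ∉ Q}
    (by
      intro c hc hchain P hP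
      have mem_sSup {x : A} : x ∈ sSup c ↔ ∃ Q ∈ c, x ∈ Q :=
        Submodule.mem_sSup_of_directed ⟨P, hP⟩ hchain.directedOn
      refine ⟨sSup c, ⟨⟨mem_sSup.2 ⟨P, hP, (hc hP).1.one_mem⟩, fun b a ha => ?_⟩, fun h => ?_⟩,
        fun Q hQ => le_sSup hQ⟩
      · obtain ⟨Q, hQ, haQ⟩ := mem_sSup.1 ha
        exact mem_sSup.2 ⟨Q, hQ, (hc hQ).1.sq_mul_mem b haQ⟩
      · obtain ⟨Q, hQ, hneg⟩ := mem_sSup.1 h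
        exact (hc hQ).2 hneg)
    M ⟨hM, hneg⟩
  exact ⟨Q, hMQ, hQ.prop.1, hQ.prop.2, hQ.prop.1.mem_or_neg_mem_of_maximal hQ.prop.2
    fun _ hQ' hneg' hle => hQ.le_of_ge ⟨hQ', hneg'⟩ hle⟩

theorem map_sq_eq_zero_of_total (htot : ∀ a, a ∈ M ∨ -a ∈ M) {L : A →ₗ[ℝ] ℝ} (hL1 : L 1 = 1)
    (hL : ∀ a ∈ M, 0 ≤ L a) {b : A} (hb : L b = 0) : L (b ^ 2) = 0 := by
  have mem_of_pos {a : A} (ha : 0 < L a) : a ∈ M :=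
    (htot a).resolve_right fun h => by linarith [hL _ h, map_neg L a]
  have le_sq {δ : ℝ} (hδ : 0 < δ) : L (b ^ 2) ≤ δ ^ 2 := by
    have hplus : δ • 1 + b ∈ M := mem_of_pos (by rw [map_add, map_smul, hL1, hb]; simpa using hδ)
    have hminus : δ • 1 - b ∈ M := mem_of_pos (by rw [map_sub, map_smul, hL1, hb]; simpa using hδ)
    have hsum : (δ • 1 - b) ^ 2 * (δ • 1 + b) + (δ • 1 + b) ^ 2 * (δ • 1 - b) =
        (2 * δ) • (δ ^ 2 • 1 - b ^ 2) := by algebra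
    have := hL _ (M.add_mem (hM.sq_mul_mem (δ • 1 - b) hplus) (hM.sq_mul_mem (δ • 1 + b) hminus))
    rw [hsum, map_smul, map_sub, map_smul, hL1, smul_eq_mul, smul_eq_mul, mul_one] at this
    exact sub_nonneg.1 (nonneg_of_mul_nonneg_right this (by positivity))
  refine le_antisymm (le_of_forall_pos_le_add fun ε hε => ?_) ?_
  · simpa only [zero_add, Real.sq_sqrt hε.le] using le_sq (Real.sqrt_pos.2 hε)
  · simpa only [mul_one] using hL _ (hM.sq_mul_mem b hM.one_mem)

theorem exists_algHom_nonneg_of_total (hu : IsOrderUnit M (1 : A)) (hneg : (-1 : A) ∉ M)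
    (htot : ∀ a, a ∈ M ∨ -a ∈ M) : ∃ χ : A →ₐ[ℝ] ℝ, ∀ a ∈ M, 0 ≤ χ a := by
  obtain ⟨L, hL1, hL⟩ := hu.exists_linearMap_nonneg hneg
  have map_sq (a : A) : L (a ^ 2) = L a ^ 2 := by
    have h0 := hM.map_sq_eq_zero_of_total htot hL1 hL (b := a - L a • 1)
      (by rw [map_sub, map_smul, hL1, smul_eq_mul, mul_one, sub_self])
    have hexp : (a - L a • 1) ^ 2 = a ^ 2 - (2 * L a) • a + L a ^ 2 • 1 := by algebra
    rw [hexp, map_add, map_sub, map_smul, map_smul, hL1, smul_eq_mul, smul_eq_mul] at h0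
    linarith
  have map_mul (a b : A) : L (a * b) = L a * L b := by
    have hpol : (a + b) ^ 2 = a ^ 2 + (2 : ℝ) • (a * b) + b ^ 2 := by algebra
    have h := map_sq (a + b)
    rw [hpol, map_add, map_add, map_smul, map_sq, map_sq, map_add, smul_eq_mul] at h
    linarith
  exact ⟨AlgHom.ofLinearMap L hL1 map_mul, hL⟩

theorem exists_sumSq_mul_eq_one_add (hu : IsOrderUnit M (1 : A)) {q : A}
    (hq : ∀ χ : A →ₐ[ℝ] ℝ, (∀ a ∈ M, 0 ≤ χ a) → 0 < χ q) :
    ∃ s, IsSumSq s ∧ ∃ m ∈ M, s * q = 1 + m := by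
  suffices (-1 : A) ∈ adjoinSumSq M (-q) by
    obtain ⟨m, hm, s, hs, h⟩ := this
    exact ⟨s, hs, m, hm, by linear_combination h⟩
  by_contra hneg
  obtain ⟨Q, hle, hQ, hnegQ, htot⟩ := (hM.adjoin (-q)).exists_le_total hneg
  have hMQ : M ≤ Q := (le_adjoinSumSq M (-q)).trans hle
  obtain ⟨χ, hχ⟩ := hQ.exists_algHom_nonneg_of_total (hu.mono hMQ) hnegQ htot
  have h1 := hq χ fun a ha => hχ a (hMQ ha)
  have h2 := hχ (-q) (hle (self_mem_adjoinSumSq M (-q)))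
  rw [map_neg] at h2
  linarith

-- The summands are chosen so that they add up to `k² (q + (r - 1 / k))`, because `s q = 1 + m`.
theorem add_smul_one_mem_of_sumSq_mul_eq {q s m : A} {k r : ℝ} (hs : IsSumSq s) (hm : m ∈ M)
    (hsq : s * q = 1 + m) (hk : 0 < k) (hks : (2 * k) • (1 : A) - s ∈ M)
    (hkq : k • (1 : A) - s ^ 2 * q ∈ M) (hr : 0 ≤ r) (hqr : q + r • (1 : A) ∈ M) :
    q + (r - 1 / k) • (1 : A) ∈ M := by
  have hmem := M.smul_mem (show (0 : ℝ) ≤ (k ^ 2)⁻¹ by positivity)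
    (M.add_mem (M.add_mem (M.add_mem (hM.sq_mul_mem (k • 1 - s) hqr)
      (M.smul_mem (show 0 ≤ 2 * k by positivity) hm))
      (M.smul_mem hr (hM.sumSq_mul_mem hs hks))) hkq)
  have hsum : (k • 1 - s) ^ 2 * (q + r • 1) + (2 * k) • m + r • (s * ((2 * k) • 1 - s)) +
      (k • 1 - s ^ 2 * q) = k ^ 2 • (q + (r - 1 / k) • 1) := by
    have hkk : k ^ 2 • (q + (r - 1 / k) • (1 : A)) = k ^ 2 • q + (k ^ 2 * r - k) • (1 : A) := by
      rw [smul_add, smul_smul]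
      congr 2
      field_simp
    have hm' : m = s * q - 1 := by rw [hsq, add_sub_cancel_left]
    rw [hkk, hm']
    algebra
  rwa [hsum, inv_smul_smul₀ (by positivity)] at hmem

/-- Jacobi's Positivstellensatz; over a polynomial ring it is Putinar's. -/
theorem mem_of_forall_algHom_pos (hu : IsOrderUnit M (1 : A)) {q : A}
    (hq : ∀ χ : A →ₐ[ℝ] ℝ, (∀ a ∈ M, 0 ≤ χ a) → 0 < χ q) : q ∈ M := by
  obtain ⟨s, hs, m, hm, hsq⟩ := hM.exists_sumSq_mul_eq_one_add hu hq
  obtain ⟨k, hk, hks, hkq⟩ : ∃ k : ℝ, 0 < k ∧ (2 * k) • (1 : A) - s ∈ M ∧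
      k • (1 : A) - s ^ 2 * q ∈ M := by
    obtain ⟨k₁, h₁⟩ := hu s
    obtain ⟨k₂, h₂⟩ := hu (s ^ 2 * q)
    refine ⟨max 1 (max k₁ k₂), by positivity, hM.smul_one_sub_mem_of_le ?_ h₁,
      hM.smul_one_sub_mem_of_le (by simp) h₂⟩
    linarith [le_max_left 1 (max k₁ k₂), (le_max_left k₁ k₂).trans (le_max_right 1 _)]
  have descend (j : ℕ) : ∀ r : ℝ, r ≤ j / k → q + r • (1 : A) ∈ M → q ∈ M := by
    have of_nonpos {r : ℝ} (hr : r ≤ 0) (hqr : q + r • (1 : A) ∈ M) : q ∈ M := by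
      convert M.add_mem hqr (hM.smul_one_mem (neg_nonneg.2 hr)) using 1
      module
    induction j with
    | zero => exact fun r hr => of_nonpos (by simpa using hr)
    | succ j ih =>
      intro r hr hqr
      rcases le_total r 0 with hr0 | hr0
      · exact of_nonpos hr0 hqr
      · refine ih (r - 1 / k) ?_ (hM.add_smul_one_mem_of_sumSq_mul_eq hs hm hsq hk hks hkq hr0 hqr)
        rw [Nat.cast_succ, add_div] at hr
        linarith
  obtain ⟨r, hr⟩ := hu (-q)
  obtain ⟨j, hj⟩ := exists_nat_ge (r * k)
  exact descend j r ((le_div_iff₀ hk).2 hj) (by rwa [sub_neg_eq_add, add_comm] at hr)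

end IsQuadraticModule

end QuadraticModule

theorem IsQuadraticModule.isOrderUnit_one_of_adjoin_eq_top {A : Type*} [CommRing A] [Algebra ℝ A]
    {M : PointedCone ℝ A} (hM : IsQuadraticModule M) {S : Set A} (hS : Algebra.adjoin ℝ S = ⊤)
    (hbdd : ∀ x ∈ S, ∃ k : ℝ, k • (1 : A) - x ^ 2 ∈ M) : IsOrderUnit M (1 : A) := by
  have sq_bdd (a : A) : ∃ k : ℝ, 0 ≤ k ∧ k • (1 : A) - a ^ 2 ∈ M := by
    have ha : a ∈ Algebra.adjoin ℝ S := hS ▸ Algebra.mem_top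
    induction ha using Algebra.adjoin_induction with
    | mem x hx =>
      obtain ⟨k, hk⟩ := hbdd x hx
      exact ⟨max k 0, le_max_right _ _, hM.smul_one_sub_mem_of_le (le_max_left _ _) hk⟩
    | algebraMap r =>
      refine ⟨r ^ 2, sq_nonneg r, ?_⟩
      rw [← map_pow, Algebra.algebraMap_eq_smul_one, sub_self]
      exact M.zero_mem
    | add a b _ _ iha ihb =>
      obtain ⟨k, hk, ha⟩ := iha
      obtain ⟨l, hl, hb⟩ := ihb
      refine ⟨2 * (k + l), by positivity, ?_⟩
      convert M.add_mem (M.smul_mem zero_le_two (M.add_mem ha hb))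
        (hM.sq_mul_mem (a - b) hM.one_mem) using 1
      algebra
    | mul a b _ _ iha ihb =>
      obtain ⟨k, hk, ha⟩ := iha
      obtain ⟨l, hl, hb⟩ := ihb
      refine ⟨k * l, by positivity, ?_⟩
      convert M.add_mem (M.smul_mem hk hb) (hM.sq_mul_mem b ha) using 1
      algebra
  intro a
  obtain ⟨k, -, hk⟩ := sq_bdd a
  refine ⟨(k + 1) / 2, ?_⟩
  convert M.smul_mem (show (0 : ℝ) ≤ 1 / 2 by norm_num)
    (M.add_mem hk (hM.sq_mul_mem (a - 1) hM.one_mem)) using 1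
  algebra

/-- The quadratic module generated by a family `H`, encoded as the convex cone spanned by the
elements `b ^ 2` and `H j * b ^ 2`, which are what the relaxations test for nonnegativity. -/
def generatedQuadraticModule {A ι : Type*} [CommRing A] [Algebra ℝ A] (H : ι → A) :
    PointedCone ℝ A :=
  PointedCone.hull ℝ (range (fun b => b ^ 2) ∪ range fun jb : ι × A => H jb.1 * jb.2 ^ 2)

section Generated

variable {A ι : Type*} [CommRing A] [Algebra ℝ A] (H : ι → A)

theorem sq_mem_generatedQuadraticModule (b : A) : b ^ 2 ∈ generatedQuadraticModule H :=
  Submodule.subset_span (.inl ⟨b, rfl⟩)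

theorem mul_sq_mem_generatedQuadraticModule (j : ι) (b : A) :
    H j * b ^ 2 ∈ generatedQuadraticModule H :=
  Submodule.subset_span (.inr ⟨(j, b), rfl⟩)

theorem isQuadraticModule_generatedQuadraticModule :
    IsQuadraticModule (generatedQuadraticModule H) where
  one_mem := by simpa only [one_pow] using sq_mem_generatedQuadraticModule H 1
  sq_mul_mem b a ha := by
    induction ha using Submodule.span_induction with
    | mem x hx =>
      rcases hx with ⟨c, rfl⟩ | ⟨⟨j, c⟩, rfl⟩
      · simpa only [mul_pow] using sq_mem_generatedQuadraticModule H (b * c)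
      · simpa only [mul_pow, mul_left_comm] using mul_sq_mem_generatedQuadraticModule H j (b * c)
    | zero => simp only [mul_zero, Submodule.zero_mem]
    | add x y _ _ ihx ihy => simpa only [mul_add] using Submodule.add_mem _ ihx ihy
    | smul c x _ ih => simpa only [mul_smul_comm] using Submodule.smul_mem _ c ih

end Generated

theorem nonpos_of_forall_pos_le_mul {a c : ℝ} (h : ∀ ε, 0 < ε → a ≤ ε * c) : a ≤ 0 := by
  have hlim : Tendsto (fun ε => ε * c) (𝓝[>] 0) (𝓝 0) := by
    have : Continuous fun ε => ε * c := by fun_prop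
    simpa using this.continuousWithinAt.tendsto (s := Ioi 0) (x := 0)
  exact ge_of_tendsto hlim (eventually_mem_nhdsWithin.mono h)

section Polynomials

variable {σ ι : Type*}

/-- The basic closed semialgebraic set `{w | ∀ j, H j w ≥ 0}` of a family of polynomials. -/
def basicClosedSet (H : ι → MvPolynomial σ ℝ) : Set (σ → ℝ) :=
  {w | ∀ j, 0 ≤ eval w (H j)}

theorem isClosed_basicClosedSet (H : ι → MvPolynomial σ ℝ) : IsClosed (basicClosedSet H) := by
  rw [basicClosedSet, ofPred_forall]
  exact isClosed_iInter fun j => isClosed_le continuous_const (MvPolynomial.continuous_eval _)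

theorem eval_nonneg_of_mem_generatedQuadraticModule {H : ι → MvPolynomial σ ℝ} {w : σ → ℝ}
    (hw : w ∈ basicClosedSet H) {q : MvPolynomial σ ℝ} (hq : q ∈ generatedQuadraticModule H) :
    0 ≤ eval w q := by
  induction hq using Submodule.span_induction with
  | mem x hx =>
    rcases hx with ⟨b, rfl⟩ | ⟨⟨j, b⟩, rfl⟩
    · simpa only [map_pow] using sq_nonneg (eval w b)
    · simpa only [map_pow, map_mul] using mul_nonneg (hw j) (sq_nonneg (eval w b))
  | zero => rw [map_zero]
  | add x y _ _ ihx ihy => rw [map_add]; exact add_nonneg ihx ihy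
  | smul c x _ ih => rw [← Nonneg.coe_smul, smul_eval]; exact mul_nonneg c.2 ih

theorem IsQuadraticModule.isOrderUnit_one_of_sub_sum_X_sq_mem [Fintype σ]
    {M : PointedCone ℝ (MvPolynomial σ ℝ)} (hM : IsQuadraticModule M) {N : ℝ}
    (hN : C N - ∑ i, X i ^ 2 ∈ M) : IsOrderUnit M (1 : MvPolynomial σ ℝ) := by
  classical
  refine hM.isOrderUnit_one_of_adjoin_eq_top adjoin_range_X ?_
  rintro _ ⟨i, rfl⟩
  have hrest : ∑ j ∈ Finset.univ.erase i, (X j : MvPolynomial σ ℝ) ^ 2 ∈ M :=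
    hM.sumSq_mem (IsSumSq.sum fun j _ => (IsSquare.sq (X j)).isSumSq)
  refine ⟨N, ?_⟩
  convert M.add_mem hN hrest using 1
  rw [← Finset.add_sum_erase _ _ (Finset.mem_univ i), ← C_mul', mul_one]
  ring

variable {H : ι → MvPolynomial σ ℝ}

theorem isCompact_basicClosedSet
    (hu : IsOrderUnit (generatedQuadraticModule H) (1 : MvPolynomial σ ℝ)) :
    IsCompact (basicClosedSet H) := by
  choose k hk using hu
  have hbox := isCompact_univ_pi fun i => isCompact_Icc (a := -k (-X i)) (b := k (X i))
  refine hbox.of_isClosed_subset (isClosed_basicClosedSet H) fun w hw i _ => ⟨?_, ?_⟩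
  · have := eval_nonneg_of_mem_generatedQuadraticModule hw (hk (-X i))
    simp only [map_sub, smul_eval, map_one, map_neg, eval_X] at this
    linarith
  · have := eval_nonneg_of_mem_generatedQuadraticModule hw (hk (X i))
    simp only [map_sub, smul_eval, map_one, eval_X] at this
    linarith

theorem mem_generatedQuadraticModule_of_pos
    (hu : IsOrderUnit (generatedQuadraticModule H) (1 : MvPolynomial σ ℝ)) {q : MvPolynomial σ ℝ}
    (hq : ∀ w ∈ basicClosedSet H, 0 < eval w q) : q ∈ generatedQuadraticModule H := by
  refine (isQuadraticModule_generatedQuadraticModule H).mem_of_forall_algHom_pos hu fun χ hχ => ?_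
  have hχ_eval (r : MvPolynomial σ ℝ) : χ r = eval (fun i => χ (X i)) r := by
    conv_lhs => rw [aeval_unique χ]
    rfl
  rw [hχ_eval]
  refine hq _ fun j => ?_
  rw [← hχ_eval]
  simpa only [one_pow, mul_one] using hχ _ (mul_sq_mem_generatedQuadraticModule H j 1)

theorem map_nonneg_of_eval_nonneg
    (hu : IsOrderUnit (generatedQuadraticModule H) (1 : MvPolynomial σ ℝ))
    {L : MvPolynomial σ ℝ →ₗ[ℝ] ℝ} (hL : ∀ q ∈ generatedQuadraticModule H, 0 ≤ L q)
    {q : MvPolynomial σ ℝ} (hq : ∀ w ∈ basicClosedSet H, 0 ≤ eval w q) : 0 ≤ L q := by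
  have hpert (ε : ℝ) (hε : 0 < ε) : 0 ≤ L q + ε * L 1 := by
    have := hL (q + ε • 1) (mem_generatedQuadraticModule_of_pos hu fun w hw => by
      rw [map_add, smul_eval, map_one, mul_one]
      linarith [hq w hw])
    rwa [map_add, map_smul, smul_eq_mul] at this
  refine neg_nonpos.1 (nonpos_of_forall_pos_le_mul (c := L 1) fun ε hε => ?_)
  linarith [hpert ε hε]

end Polynomials

section RieszRepresentation

variable {V : Type*} [AddCommGroup V] [Module ℝ V]

theorem exists_linearMap_comp_eq {W : Type*} [AddCommGroup W] [Module ℝ W] (T : V →ₗ[ℝ] W)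
    (L : V →ₗ[ℝ] ℝ) (h : ∀ v, T v = 0 → L v = 0) :
    ∃ L' : LinearMap.range T →ₗ[ℝ] ℝ, ∀ v, L' (T.rangeRestrict v) = L v := by
  obtain ⟨s, hs⟩ := T.rangeRestrict.exists_rightInverse_of_surjective T.range_rangeRestrict
  refine ⟨L ∘ₗ s, fun v => ?_⟩
  have hT : T (s (T.rangeRestrict v) - v) = 0 := by
    rw [map_sub, sub_eq_zero]
    exact congrArg Subtype.val (LinearMap.congr_fun hs (T.rangeRestrict v))
  exact sub_eq_zero.1 ((map_sub L _ _).symm.trans (h _ hT))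

theorem exists_linearMap_extension_nonneg {X : Type*} [TopologicalSpace X] [CompactSpace X]
    (T : V →ₗ[ℝ] C(X, ℝ)) {e : V} (he : T e = 1) (L : V →ₗ[ℝ] ℝ) (hL : ∀ v, 0 ≤ T v → 0 ≤ L v) :
    ∃ Λ : C(X, ℝ) →ₗ[ℝ] ℝ, (∀ v, Λ (T v) = L v) ∧ ∀ u, 0 ≤ u → 0 ≤ Λ u := by
  obtain ⟨L', hL'⟩ := exists_linearMap_comp_eq T L fun v hv =>
    le_antisymm (by simpa using hL (-v) (by simp [hv])) (hL v hv.ge)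
  obtain ⟨Λ, hΛ, hΛ_nonneg⟩ := riesz_extension (PointedCone.positive ℝ C(X, ℝ))
    ⟨LinearMap.range T, L'⟩
    (by
      rintro ⟨_, v, rfl⟩ hv
      exact (hL v hv).trans_eq (hL' v).symm)
    (by
      intro u
      refine ⟨⟨T (‖u‖ • e), ⟨_, rfl⟩⟩, fun x => ?_⟩
      have := neg_le_of_abs_le (u.norm_coe_le_norm x)
      simpa [he, neg_le_iff_add_nonneg'] using this)
  exact ⟨Λ, fun v => (hΛ (T.rangeRestrict v)).trans (hL' v), hΛ_nonneg⟩

theorem exists_measure_integral_eq {X : Type*} [TopologicalSpace X] [CompactSpace X] [T2Space X]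
    [MeasurableSpace X] [BorelSpace X] (Λ : C(X, ℝ) →ₗ[ℝ] ℝ) (hΛ : ∀ u, 0 ≤ u → 0 ≤ Λ u) :
    ∃ μ : Measure X, IsFiniteMeasure μ ∧ ∀ u : C(X, ℝ), ∫ x, u x ∂μ = Λ u := by
  let Λc : CompactlySupportedContinuousMap X ℝ →ₚ[ℝ] ℝ := PositiveLinearMap.mk₀
    { toFun := fun u => Λ u.toContinuousMap
      map_add' := fun u v => by rw [← map_add]; rfl
      map_smul' := fun c u => by rw [← map_smul]; rfl } fun u hu => hΛ _ hu
  exact ⟨RealRMK.rieszMeasure Λc, inferInstance, fun u =>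
    RealRMK.integral_rieszMeasure Λc (CompactlySupportedContinuousMap.continuousMapEquiv u)⟩

/-- The Riesz–Haviland theorem on a compact set. -/
theorem exists_measure_of_map_nonneg {E : Type*} [TopologicalSpace E] [T2Space E]
    [MeasurableSpace E] [BorelSpace E] {K : Set E} (hK : IsCompact K) (T : V →ₗ[ℝ] C(E, ℝ)) {e : V}
    (he : T e = 1) (L : V →ₗ[ℝ] ℝ) (hL : ∀ v, (∀ w ∈ K, 0 ≤ T v w) → 0 ≤ L v) :
    ∃ μ : Measure E, IsFiniteMeasure μ ∧ μ Kᶜ = 0 ∧ ∀ v, ∫ w, T v w ∂μ = L v := by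
  have := isCompact_iff_compactSpace.1 hK
  let ρ : C(E, ℝ) →ₐ[ℝ] C(K, ℝ) :=
    ContinuousMap.compRightAlgHom ℝ ℝ ⟨Subtype.val, continuous_subtype_val⟩
  obtain ⟨Λ, hΛ, hΛ_nonneg⟩ := exists_linearMap_extension_nonneg (ρ.toLinearMap ∘ₗ T) (e := e)
    (by simp [he]) L fun v hv => hL v fun w hw => hv ⟨w, hw⟩
  obtain ⟨ν, hν, hνΛ⟩ := exists_measure_integral_eq Λ hΛ_nonneg
  refine ⟨ν.map Subtype.val, inferInstance, ?_, fun v => ?_⟩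
  · rw [Measure.map_apply measurable_subtype_coe hK.measurableSet.compl, preimage_compl,
      Subtype.coe_preimage_self, compl_univ, measure_empty]
  · rw [(MeasurableEmbedding.subtype_coe hK.measurableSet).integral_map]
    exact (hνΛ _).trans (hΛ v)

end RieszRepresentation

section Moments

variable {σ : Type*}

/-- The algebra map sending a polynomial to the continuous function it defines on `σ → ℝ`; it makes
Stone–Weierstrass and the extension of functionals to continuous functions applicable. -/
def polynomialFunction (σ : Type*) : MvPolynomial σ ℝ →ₐ[ℝ] C(σ → ℝ, ℝ) where
  toFun q := ⟨fun w => eval w q, q.continuous_eval⟩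
  map_one' := by ext; simp
  map_mul' _ _ := by ext; simp
  map_zero' := by ext; simp
  map_add' _ _ := by ext; simp
  commutes' _ := by ext; simp

theorem separatesPoints_range_polynomialFunction :
    (polynomialFunction σ).range.SeparatesPoints := by
  intro w w' hne
  obtain ⟨i, hi⟩ := Function.ne_iff.1 hne
  exact ⟨_, ⟨polynomialFunction σ (X i), ⟨X i, rfl⟩, rfl⟩, by simpa [polynomialFunction] using hi⟩

theorem exists_measure_of_archimedean {ι : Type*} [Countable σ] {H : ι → MvPolynomial σ ℝ}
    (hu : IsOrderUnit (generatedQuadraticModule H) (1 : MvPolynomial σ ℝ))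
    {L : MvPolynomial σ ℝ →ₗ[ℝ] ℝ} (hL : ∀ q ∈ generatedQuadraticModule H, 0 ≤ L q) :
    ∃ μ : Measure (σ → ℝ), IsFiniteMeasure μ ∧ μ (basicClosedSet H)ᶜ = 0 ∧
      ∀ q, ∫ w, eval w q ∂μ = L q :=
  exists_measure_of_map_nonneg (isCompact_basicClosedSet hu)
    (polynomialFunction σ).toLinearMap
    (map_one (polynomialFunction σ)) L fun _ => map_nonneg_of_eval_nonneg hu hL

theorem integrable_of_isCompact {E : Type*} [TopologicalSpace E] [T2Space E] [MeasurableSpace E]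
    [OpensMeasurableSpace E] {μ : Measure E} [IsFiniteMeasure μ]
    {K : Set E} (hK : IsCompact K) (hμK : μ Kᶜ = 0) {F : E → ℝ} (hF : Continuous F) :
    Integrable F μ := by
  rw [← Measure.restrict_eq_self_of_ae_mem (show ∀ᵐ w ∂μ, w ∈ K from hμK)]
  exact hF.continuousOn.integrableOn_compact hK

theorem measure_eq_of_forall_integral_eval_eq [Countable σ] {μ ν : Measure (σ → ℝ)}
    [IsFiniteMeasure μ] [IsFiniteMeasure ν] {K : Set (σ → ℝ)} (hK : IsCompact K) (hμK : μ Kᶜ = 0)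
    (hνK : ν Kᶜ = 0) (h : ∀ q : MvPolynomial σ ℝ, ∫ w, eval w q ∂μ = ∫ w, eval w q ∂ν) : μ = ν := by
  refine ext_of_forall_integral_eq_of_IsFiniteMeasure fun F => ?_
  have near (ε : ℝ) (hε : 0 < ε) :
      |∫ w, F w ∂μ - ∫ w, F w ∂ν| ≤ ε * (μ.real univ + ν.real univ) := by
    obtain ⟨_, ⟨q, rfl⟩, hq⟩ :=
      ContinuousMap.exists_mem_subalgebra_near_continuous_of_isCompact_of_separatesPoints
        separatesPoints_range_polynomialFunction F.toContinuousMap hK hε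
    have integral_near {ρ : Measure (σ → ℝ)} [IsFiniteMeasure ρ] (hρK : ρ Kᶜ = 0) :
        |∫ w, eval w q ∂ρ - ∫ w, F w ∂ρ| ≤ ε * ρ.real univ := by
      rw [← integral_sub (integrable_of_isCompact hK hρK q.continuous_eval)
        (integrable_of_isCompact hK hρK F.continuous)]
      exact norm_integral_le_of_norm_le_const
        ((show ∀ᵐ w ∂ρ, w ∈ K from hρK).mono fun w hw => (hq w hw).le)
    have hμ := integral_near hμK
    have hν := integral_near hνK
    rw [h q, abs_sub_comm] at hμ
    rw [mul_add]
    exact (abs_sub_le _ _ _).trans (add_le_add hμ hν)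
  exact eq_of_abs_sub_nonpos (nonpos_of_forall_pos_le_mul near)

end Moments

section Selection

variable {Ω E : Type*}

/-- The set of minimizers of `u` on `S`, the optimal solutions of the parametric problem. -/
def argminOn (u : E → ℝ) (S : Set E) : Set E :=
  {x ∈ S | ∀ x' ∈ S, u x ≤ u x'}

theorem argminOn_image {E' : Type*} (u : E' → ℝ) (h : E → E') (S : Set E) :
    argminOn u (h '' S) = h '' argminOn (u ∘ h) S := by
  ext w
  constructor
  · rintro ⟨⟨x, hx, rfl⟩, hmin⟩
    exact ⟨x, ⟨hx, fun x' hx' => hmin _ (mem_image_of_mem h hx')⟩, rfl⟩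
  · rintro ⟨x, ⟨hx, hmin⟩, rfl⟩
    exact ⟨mem_image_of_mem h hx, forall_mem_image.2 hmin⟩

theorem sInf_image_eq_of_mem_argminOn {u : E → ℝ} {S : Set E} {x : E} (hx : x ∈ argminOn u S) :
    sInf (u '' S) = u x :=
  IsLeast.csInf_eq ⟨⟨x, hx.1, rfl⟩, forall_mem_image.2 hx.2⟩

theorem isCompact_argminOn [TopologicalSpace E] {u : E → ℝ} (hu : Continuous u) {S : Set E}
    (hS : IsCompact S) : IsCompact (argminOn u S) := by
  have : argminOn u S = S ∩ ⋂ x' ∈ S, {x | u x ≤ u x'} := by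
    ext x
    simp only [argminOn, mem_ofPred_eq, mem_inter_iff, mem_iInter]
  rw [this]
  exact hS.inter_right (isClosed_biInter fun x' _ => isClosed_le hu continuous_const)

theorem argminOn_nonempty [TopologicalSpace E] {u : E → ℝ} (hu : Continuous u) {S : Set E}
    (hS : IsCompact S) (hne : S.Nonempty) : (argminOn u S).Nonempty :=
  let ⟨x, hx, hmin⟩ := hS.exists_isMinOn hne hu.continuousOn
  ⟨x, hx, fun _ hx' => hmin hx'⟩

theorem argminOn_inter_nonempty_iff [TopologicalSpace E] {u : E → ℝ} (hu : Continuous u)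
    {S C : Set E} (hS : IsCompact S) (hC : IsClosed C) :
    (argminOn u S ∩ C).Nonempty ↔ (S ∩ C).Nonempty ∧ ∀ r : ℚ,
      (S ∩ {x | u x ≤ r}).Nonempty → (S ∩ (C ∩ {x | u x ≤ r})).Nonempty := by
  constructor
  · rintro ⟨x, ⟨hx, hmin⟩, hxC⟩
    exact ⟨⟨x, hx, hxC⟩, fun r ⟨x', hx', hr⟩ => ⟨x, hx, hxC, (hmin x' hx').trans hr⟩⟩
  · rintro ⟨hne, hlevel⟩
    obtain ⟨x, hx, hmin⟩ := argminOn_nonempty hu (hS.inter_right hC) hne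
    refine ⟨x, ⟨hx.1, fun x' hx' => ?_⟩, hx.2⟩
    by_contra! hlt
    obtain ⟨r, hr, hrx⟩ := exists_rat_btwn hlt
    obtain ⟨x₁, hx₁, hx₁C, hx₁r⟩ := hlevel r ⟨x', hx', hr.le⟩
    exact absurd ((hmin x₁ ⟨hx₁, hx₁C⟩).trans hx₁r) hrx.not_ge

variable [MeasurableSpace Ω] [TopologicalSpace E]

/-- Compact-valued multifunctions, used to select minimizers measurably, that are measurable in the
sense that the set of parameters whose value hits a given closed set is measurable. Empty values are
allowed. -/
structure IsMeasurableMultifunction (S : Ω → Set E) : Prop where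
  isCompact (ω : Ω) : IsCompact (S ω)
  measurableSet_hit {C : Set E} (hC : IsClosed C) : MeasurableSet {ω | (S ω ∩ C).Nonempty}

namespace IsMeasurableMultifunction

variable {S : Ω → Set E} (hS : IsMeasurableMultifunction S)
include hS

theorem measurableSet_nonempty : MeasurableSet {ω | (S ω).Nonempty} := by
  simpa only [inter_univ] using hS.measurableSet_hit isClosed_univ

theorem argminOn {u : E → ℝ} (hu : Continuous u) :
    IsMeasurableMultifunction fun ω => argminOn u (S ω) where
  isCompact ω := isCompact_argminOn hu (hS.isCompact ω)
  measurableSet_hit {C} hC := by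
    have hle (r : ℚ) : IsClosed {x | u x ≤ r} := isClosed_le hu continuous_const
    simp only [argminOn_inter_nonempty_iff hu (hS.isCompact _) hC, ofPred_and, ofPred_forall]
    exact (hS.measurableSet_hit hC).inter <| MeasurableSet.iInter fun r =>
      (hS.measurableSet_hit (hle r)).imp (hS.measurableSet_hit (hC.inter (hle r)))

theorem exists_forall_const {κ : Type*} (u : κ → E → ℝ) (hu : ∀ i, Continuous (u i))
    (t : Finset κ) :
    ∃ S' : Ω → Set E, IsMeasurableMultifunction S' ∧ (∀ ω, S' ω ⊆ S ω) ∧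
      (∀ ω, (S ω).Nonempty → (S' ω).Nonempty) ∧
      ∀ i ∈ t, ∀ ω, ∀ x ∈ S' ω, ∀ x' ∈ S' ω, u i x = u i x' := by
  classical
  induction t using Finset.induction_on with
  | empty => exact ⟨S, hS, fun _ => subset_rfl, fun _ => id, by simp⟩
  | insert i t _ ih =>
    obtain ⟨S', hS', hsub, hne, hconst⟩ := ih
    refine ⟨fun ω => _root_.argminOn (u i) (S' ω), hS'.argminOn (hu i),
      fun ω => (sep_subset _ _).trans (hsub ω),
      fun ω h => argminOn_nonempty (hu i) (hS'.isCompact ω) (hne ω h), fun j hj ω x hx x' hx' => ?_⟩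
    rcases Finset.mem_insert.1 hj with rfl | hj
    · exact le_antisymm (hx.2 x' hx'.1) (hx'.2 x hx.1)
    · exact hconst j hj ω x hx.1 x' hx'.1

theorem measurable_of_subsingleton [MeasurableSpace E] [BorelSpace E]
    (hsub : ∀ ω, (S ω).Subsingleton) {s : Ω → E} {e : E} (hs : ∀ ω, (S ω).Nonempty → s ω ∈ S ω)
    (he : ∀ ω, ¬(S ω).Nonempty → s ω = e) : Measurable s := by
  refine measurable_of_isClosed fun D hD => ?_
  have : s ⁻¹' D = {ω | (S ω ∩ D).Nonempty} ∪ ({ω | (S ω).Nonempty}ᶜ ∩ {_ω | e ∈ D}) := by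
    ext ω
    by_cases hω : (S ω).Nonempty
    · have : (S ω ∩ D).Nonempty ↔ s ω ∈ D :=
        ⟨fun ⟨x, hx, hxD⟩ => hsub ω hx (hs ω hω) ▸ hxD, fun h => ⟨s ω, hs ω hω, h⟩⟩
      simp [hω, this]
    · have : ¬(S ω ∩ D).Nonempty := fun h => hω (h.mono inter_subset_left)
      simp [hω, this, he ω hω]
  rw [this]
  exact (hS.measurableSet_hit hD).union (hS.measurableSet_nonempty.compl.inter (.const _))

end IsMeasurableMultifunction

theorem IsMeasurableMultifunction.exists_measurable_selection {κ : Type*} [Finite κ]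
    {S : Ω → Set (κ → ℝ)} (hS : IsMeasurableMultifunction S) :
    ∃ s : Ω → κ → ℝ, Measurable s ∧ ∀ ω, (S ω).Nonempty → s ω ∈ S ω := by
  classical
  cases nonempty_fintype κ
  obtain ⟨S', hS', hsub, hne, hconst⟩ :=
    hS.exists_forall_const (fun k x => x k) continuous_apply Finset.univ
  let s (ω : Ω) : κ → ℝ := if h : (S' ω).Nonempty then h.some else 0
  have hs (ω : Ω) (h : (S' ω).Nonempty) : s ω ∈ S' ω := by
    simpa only [s, dif_pos h] using h.some_mem
  refine ⟨s, hS'.measurable_of_subsingleton (e := 0) ?_ hs fun ω h => dif_neg h,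
    fun ω h => hsub ω (hs ω (hne ω h))⟩
  exact fun ω x hx x' hx' => funext fun k => hconst k (Finset.mem_univ k) ω x hx x' hx'

theorem isMeasurableMultifunction_fiber {B : Type*} [T2Space E] [TopologicalSpace B] [T2Space B]
    [MeasurableSpace B] [OpensMeasurableSpace B] {K : Set E} (hK : IsCompact K) {π : E → B}
    (hπ : Continuous π) : IsMeasurableMultifunction fun y => K ∩ π ⁻¹' {y} where
  isCompact y := hK.inter_right (isClosed_singleton.preimage hπ)
  measurableSet_hit {C} hC := by
    have : {y | (K ∩ π ⁻¹' {y} ∩ C).Nonempty} = π '' (K ∩ C) := by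
      ext y
      simp only [Set.Nonempty, mem_image, mem_inter_iff, mem_preimage, mem_singleton_iff]
      exact exists_congr fun w => by tauto
    rw [this]
    exact ((hK.inter_right hC).image hπ).measurableSet

theorem exists_measurable_argminOn_fiber {κ B : Type*} [Finite κ] [TopologicalSpace B] [T2Space B]
    [MeasurableSpace B] [OpensMeasurableSpace B] {K : Set (κ → ℝ)} (hK : IsCompact K)
    {π : (κ → ℝ) → B} (hπ : Continuous π) {F : (κ → ℝ) → ℝ} (hF : Continuous F) :
    ∃ s : B → κ → ℝ, Measurable s ∧
      ∀ y, (K ∩ π ⁻¹' {y}).Nonempty → s y ∈ argminOn F (K ∩ π ⁻¹' {y}) := by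
  have hfib := isMeasurableMultifunction_fiber hK hπ
  obtain ⟨s, hs, hsel⟩ := (hfib.argminOn hF).exists_measurable_selection
  exact ⟨s, hs, fun y hy => hsel y (argminOn_nonempty hF (hfib.isCompact y) hy)⟩

end Selection

theorem map_eq_self_of_integral_le {E : Type*} [MeasurableSpace E] {μ : Measure E} {F : E → ℝ}
    {r : E → E} (hr : Measurable r) (hF : Integrable F μ) (hF' : Integrable F (μ.map r))
    (hmin : ∀ᵐ w ∂μ, F (r w) ≤ F w) (huniq : ∀ᵐ w ∂μ, F w ≤ F (r w) → r w = w)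
    (hle : ∫ w, F w ∂μ ≤ ∫ w, F w ∂μ.map r) : μ.map r = μ := by
  rw [integral_map hr.aemeasurable hF'.aestronglyMeasurable] at hle
  have hFr : Integrable (fun w => F (r w)) μ := hF'.comp_measurable hr
  have hae := (integral_eq_iff_of_ae_le hFr hF hmin).1
    ((integral_mono_ae hFr hF hmin).antisymm hle)
  have hrid : r =ᵐ[μ] id := by
    filter_upwards [hae, huniq] with w hw hw' using hw' hw.ge
  rw [Measure.map_congr hrid, Measure.map_id]

theorem map_map_eq_self_of_argminOn {E B : Type*} [MeasurableSpace E] [MeasurableSpace B]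
    {μ : Measure E} {K : Set E} (hμK : μ Kᶜ = 0) {F : E → ℝ} (hF : Integrable F μ) {π : E → B}
    (hπ : Measurable π) {s : B → E} (hs : Measurable s)
    (hF' : Integrable F ((μ.map π).map s))
    (hmin : ∀ᵐ y ∂μ.map π, s y ∈ argminOn F (K ∩ π ⁻¹' {y}))
    (huniq : ∀ᵐ y ∂μ.map π, (argminOn F (K ∩ π ⁻¹' {y})).Subsingleton)
    (hle : ∫ w, F w ∂μ ≤ ∫ w, F w ∂(μ.map π).map s) : (μ.map π).map s = μ := by
  rw [Measure.map_map hs hπ] at hF' hle ⊢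
  have hK : ∀ᵐ w ∂μ, w ∈ K := hμK
  have hmin' := ae_of_ae_map hπ.aemeasurable hmin
  refine map_eq_self_of_integral_le (hs.comp hπ) hF hF' ?_ ?_ hle
  · filter_upwards [hK, hmin'] with w hw hsw using hsw.2 w ⟨hw, rfl⟩
  · filter_upwards [hK, hmin', ae_of_ae_map hπ.aemeasurable huniq] with w hw hsw hsub hle_w
    exact hsub hsw ⟨⟨hw, rfl⟩, fun w' hw' => hle_w.trans (hsw.2 w' hw')⟩

section Convergence

theorem tendsto_of_forall_ultrafilter_linearMap {V I : Type*} [AddCommGroup V] [Module ℝ V]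
    {l : Filter I} {Ls : I → V →ₗ[ℝ] ℝ} (hbdd : ∀ v, ∃ c, ∀ᶠ i in l, |Ls i v| ≤ c) {L₀ : V → ℝ}
    (h : ∀ (U : Ultrafilter I) (L : V →ₗ[ℝ] ℝ), (U : Filter I) ≤ l →
      (∀ v, Tendsto (fun i => Ls i v) U (𝓝 (L v))) → ∀ v, L v = L₀ v) (v : V) :
    Tendsto (fun i => Ls i v) l (𝓝 (L₀ v)) := by
  rw [tendsto_iff_ultrafilter]
  intro U hU
  have hlim (v : V) : ∃ a, Tendsto (fun i => Ls i v) U (𝓝 a) := by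
    obtain ⟨c, hc⟩ := hbdd v
    obtain ⟨a, -, ha⟩ := (isCompact_Icc (a := -c) (b := c)).ultrafilter_le_nhds'
      (U.map fun i => Ls i v) (hU (hc.mono fun i hi => abs_le.1 hi))
    exact ⟨a, ha⟩
  choose L hL using hlim
  have hL_lim := tendsto_pi_nhds.2 hL
  exact h U (linearMapOfTendsto L Ls hL_lim) hU hL v ▸ hL v

theorem IsQuadraticModule.exists_eventually_abs_map_le {A I : Type*} [CommRing A] [Algebra ℝ A]
    {M : PointedCone ℝ A} (hM : IsQuadraticModule M) (hu : IsOrderUnit M (1 : A)) {l : Filter I}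
    {Ls : I → A →ₗ[ℝ] ℝ} (hLs : ∀ a ∈ M, ∀ᶠ i in l, 0 ≤ Ls i a) {m : ℝ}
    (hm : ∀ᶠ i in l, Ls i 1 ≤ m) (a : A) : ∃ c, ∀ᶠ i in l, |Ls i a| ≤ c := by
  have hbound (a : A) : ∃ c, ∀ᶠ i in l, Ls i a ≤ c := by
    obtain ⟨k, hk⟩ := hu a
    refine ⟨max k 0 * m, ?_⟩
    filter_upwards [hLs _ (hM.smul_one_sub_mem_of_le (le_max_left k 0) hk), hm] with i hi hi_one
    rw [map_sub, map_smul, smul_eq_mul, sub_nonneg] at hi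
    exact hi.trans (mul_le_mul_of_nonneg_left hi_one (le_max_right _ _))
  obtain ⟨c, hc⟩ := hbound a
  obtain ⟨c', hc'⟩ := hbound (-a)
  refine ⟨max c c', ?_⟩
  filter_upwards [hc, hc'] with i hi hi'
  rw [map_neg] at hi'
  exact abs_le'.2 ⟨hi.trans (le_max_left _ _), hi'.trans (le_max_right _ _)⟩

/-- The minimizers of `f` on the fibre over `y` of the basic closed set of `H`, where the
coordinates indexed by `e` are those of the parameter `y`. -/
def fiberMinimizers {σ τ ι : Type*} (H : ι → MvPolynomial σ ℝ) (e : τ → σ)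
    (f : MvPolynomial σ ℝ) (y : τ → ℝ) : Set (σ → ℝ) :=
  argminOn (fun w => eval w f) (basicClosedSet H ∩ (fun w => w ∘ e) ⁻¹' {y})

variable {σ τ ι : Type*} [Countable σ] [Countable τ] {H : ι → MvPolynomial σ ℝ}
  (hu : IsOrderUnit (generatedQuadraticModule H) (1 : MvPolynomial σ ℝ)) {e : τ → σ}
  {f : MvPolynomial σ ℝ} {φ : Measure (τ → ℝ)} [IsFiniteMeasure φ]

include hu in
theorem map_comp_right_eq_of_moments {μ : Measure (σ → ℝ)} [IsFiniteMeasure μ]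
    (hμ : μ (basicClosedSet H)ᶜ = 0)
    (hφ : ∀ᵐ y ∂φ, (basicClosedSet H ∩ (fun w => w ∘ e) ⁻¹' {y}).Nonempty)
    (hmarg : ∀ r : MvPolynomial τ ℝ, ∫ w, eval w (rename e r) ∂μ = ∫ y, eval y r ∂φ) :
    μ.map (fun w => w ∘ e) = φ := by
  have hπ : Continuous fun w : σ → ℝ => w ∘ e := by fun_prop
  have hK := (isCompact_basicClosedSet hu).image hπ
  refine measure_eq_of_forall_integral_eval_eq hK ?_ ?_ fun r => ?_
  · rw [Measure.map_apply hπ.measurable hK.measurableSet.compl]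
    exact measure_mono_null (fun w hw hwK => hw (mem_image_of_mem _ hwK)) hμ
  · exact hφ.mono fun y ⟨w, hw, hwy⟩ => ⟨w, hw, hwy⟩
  · rw [integral_map hπ.measurable.aemeasurable r.continuous_eval.aestronglyMeasurable, ← hmarg r]
    simp only [eval_rename]

variable {s : (τ → ℝ) → σ → ℝ} (hs : Measurable s)
  (hmin : ∀ᵐ y ∂φ, s y ∈ fiberMinimizers H e f y)

include hu hs hmin in
theorem map_eq_integral_map_selection
    (huniq : ∀ᵐ y ∂φ, (fiberMinimizers H e f y).Subsingleton) {L : MvPolynomial σ ℝ →ₗ[ℝ] ℝ}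
    (hL : ∀ q ∈ generatedQuadraticModule H, 0 ≤ L q)
    (hmarg : ∀ r : MvPolynomial τ ℝ, L (rename e r) = ∫ y, eval y r ∂φ)
    (hle : L f ≤ ∫ w, eval w f ∂φ.map s) (q : MvPolynomial σ ℝ) :
    L q = ∫ w, eval w q ∂φ.map s := by
  obtain ⟨μ, _, hμ, hμL⟩ := exists_measure_of_archimedean hu hL
  have hπ : Measurable fun w : σ → ℝ => w ∘ e := by fun_prop
  have hK := isCompact_basicClosedSet hu
  have hmap : μ.map (fun w => w ∘ e) = φ :=
    map_comp_right_eq_of_moments hu hμ (hmin.mono fun y hy => ⟨s y, hy.1⟩)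
      fun r => (hμL _).trans (hmarg r)
  have hνK : φ.map s (basicClosedSet H)ᶜ = 0 :=
    (ae_map_iff hs.aemeasurable hK.measurableSet).2 (hmin.mono fun y hy => hy.1.1)
  subst hmap
  have hf := integrable_of_isCompact hK hμ f.continuous_eval
  have hf' := integrable_of_isCompact hK hνK f.continuous_eval
  rw [← hμL q,
    map_map_eq_self_of_argminOn hμ hf hπ hs hf' hmin huniq ((hμL f).trans_le hle)]

include hu hs hmin in
theorem tendsto_integral_map_selection {I : Type*} {l : Filter I}
    (huniq : ∀ᵐ y ∂φ, (fiberMinimizers H e f y).Subsingleton)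
    {Ls : I → MvPolynomial σ ℝ →ₗ[ℝ] ℝ}
    (hLs : ∀ q ∈ generatedQuadraticModule H, ∀ᶠ i in l, 0 ≤ Ls i q)
    (hmarg : ∀ r : MvPolynomial τ ℝ,
      Tendsto (fun i => Ls i (rename e r)) l (𝓝 (∫ y, eval y r ∂φ)))
    {ε : I → ℝ} (hε : Tendsto ε l (𝓝 0))
    (hle : ∀ᶠ i in l, Ls i f ≤ ∫ w, eval w f ∂φ.map s + ε i) (q : MvPolynomial σ ℝ) :
    Tendsto (fun i => Ls i q) l (𝓝 (∫ w, eval w q ∂φ.map s)) := by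
  have hone : Tendsto (fun i => Ls i 1) l (𝓝 (φ.real univ)) := by
    simpa only [map_one, integral_const, smul_eq_mul, mul_one] using hmarg 1
  refine tendsto_of_forall_ultrafilter_linearMap (L₀ := fun q => ∫ w, eval w q ∂φ.map s)
    ((isQuadraticModule_generatedQuadraticModule H).exists_eventually_abs_map_le hu hLs
      (hone.eventually_le_const (lt_add_one _))) (fun U L hU hL => ?_) q
  refine map_eq_integral_map_selection hu hs hmin huniq
    (fun a ha => ge_of_tendsto (hL a) (hU (hLs a ha)))
    (fun r => tendsto_nhds_unique (hL _) ((hmarg r).mono_left hU)) ?_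
  have hrhs : Tendsto (fun i => ∫ w, eval w f ∂φ.map s + ε i) l
      (𝓝 (∫ w, eval w f ∂φ.map s)) := by
    simpa only [add_zero] using tendsto_const_nhds.add hε
  exact le_of_tendsto_of_tendsto (hL f) (hrhs.mono_left hU) (hU hle)

end Convergence

section Relaxation

variable {n p : ℕ} {ι : Type*} [Fintype ι] {H : ι → MvPolynomial (Fin n ⊕ Fin p) ℝ}
  {γ : (Fin p → ℕ) → ℝ} {f : MvPolynomial (Fin n ⊕ Fin p) ℝ}

/-- The Riesz functional `L_z` as a bundled linear map, so that linearity and limits of such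
functionals are available; it agrees with `Lz`. -/
def rieszFunctional (z : (Fin n → ℕ) → (Fin p → ℕ) → ℝ) :
    MvPolynomial (Fin n ⊕ Fin p) ℝ →ₗ[ℝ] ℝ :=
  (basisMonomials (Fin n ⊕ Fin p) ℝ).constr ℝ fun d => z (d ∘ Sum.inl) (d ∘ Sum.inr)

theorem rieszFunctional_monomial (z : (Fin n → ℕ) → (Fin p → ℕ) → ℝ) (d : Fin n ⊕ Fin p →₀ ℕ)
    (c : ℝ) : rieszFunctional z (monomial d c) = c * z (d ∘ Sum.inl) (d ∘ Sum.inr) := by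
  have : (monomial d c : MvPolynomial (Fin n ⊕ Fin p) ℝ) = c • basisMonomials _ ℝ d := by
    rw [coe_basisMonomials, smul_monomial, smul_eq_mul, mul_one]
  rw [this, map_smul, rieszFunctional, Module.Basis.constr_basis, smul_eq_mul]

theorem rieszFunctional_apply (z : (Fin n → ℕ) → (Fin p → ℕ) → ℝ)
    (q : MvPolynomial (Fin n ⊕ Fin p) ℝ) : rieszFunctional z q = Lz n p z q := by
  conv_lhs => rw [q.as_sum]
  rw [map_sum]
  exact Finset.sum_congr rfl fun d _ => rieszFunctional_monomial z d _

theorem degOK_of_totalDegree_le {q : MvPolynomial (Fin n ⊕ Fin p) ℝ} {i : ℕ}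
    (h : q.totalDegree ≤ i) : DegOK n p i q := by
  intro d hd
  have hd_le := (le_totalDegree hd).trans h
  rw [Finsupp.sum_fintype _ _ fun _ => rfl, Fintype.sum_sum_type] at hd_le
  omega

theorem eventually_forall_relaxFeasible_nonneg {a : MvPolynomial (Fin n ⊕ Fin p) ℝ}
    (ha : a ∈ generatedQuadraticModule H) :
    ∀ᶠ i in atTop, ∀ z, RelaxFeasible n p H γ i z → 0 ≤ rieszFunctional z a := by
  induction ha using Submodule.span_induction with
  | mem x hx =>
    rcases hx with ⟨b, rfl⟩ | ⟨⟨j, b⟩, rfl⟩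
    · filter_upwards [eventually_ge_atTop b.totalDegree] with i hi z hz
      rw [rieszFunctional_apply]
      exact hz.1 b (degOK_of_totalDegree_le hi)
    · filter_upwards [eventually_ge_atTop (b.totalDegree + halfDeg (H j))] with i hi z hz
      rw [rieszFunctional_apply]
      exact hz.2.1 j b (degOK_of_totalDegree_le (Nat.le_sub_of_add_le hi))
  | zero => exact .of_forall fun i z _ => (map_zero (rieszFunctional z)).ge
  | add x y _ _ ihx ihy =>
    filter_upwards [ihx, ihy] with i hx hy z hz
    rw [map_add]
    exact add_nonneg (hx z hz) (hy z hz)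
  | smul c x _ ih =>
    filter_upwards [ih] with i hx z hz
    rw [← Nonneg.coe_smul, map_smul]
    exact mul_nonneg c.2 (hx z hz)

theorem RelaxFeasible.rieszFunctional_one {i : ℕ} {z : (Fin n → ℕ) → (Fin p → ℕ) → ℝ}
    (hz : RelaxFeasible n p H γ i z) : rieszFunctional z 1 = γ 0 := by
  rw [← C_1, ← monomial_zero', rieszFunctional_monomial, one_mul]
  exact hz.2.2 0 (by simp)

theorem bddBelow_relaxation_values {i : ℕ} {k : ℝ}
    (hk : ∀ z, RelaxFeasible n p H γ i z → 0 ≤ rieszFunctional z (k • 1 - -f)) :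
    BddBelow {r | ∃ z, RelaxFeasible n p H γ i z ∧ r = Lz n p z f} := by
  refine ⟨-(k * γ 0), ?_⟩
  rintro _ ⟨z, hz, rfl⟩
  have := hk z hz
  rw [map_sub, map_smul, map_neg, hz.rieszFunctional_one, smul_eq_mul] at this
  rw [← rieszFunctional_apply]
  linarith

variable {φ : Measure (Fin p → ℝ)}

theorem eventually_forall_relaxFeasible_rename_inr
    (hint : ∀ r : MvPolynomial (Fin p) ℝ, Integrable (fun y => eval y r) φ)
    (hγ : ∀ β, γ β = ∫ y, ∏ l, y l ^ β l ∂φ) (r : MvPolynomial (Fin p) ℝ) :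
    ∀ᶠ i in atTop, ∀ z, RelaxFeasible n p H γ i z →
      rieszFunctional z (rename Sum.inr r) = ∫ y, eval y r ∂φ := by
  induction r using MvPolynomial.induction_on' with
  | monomial d c =>
    filter_upwards [eventually_ge_atTop (∑ l, d l)] with i hi z hz
    have hd_inl : (d.mapDomain Sum.inr : Fin n ⊕ Fin p →₀ ℕ) ∘ Sum.inl = fun _ => 0 :=
      funext fun k => Finsupp.mapDomain_of_notMem_range _ _ (by simp)
    have hd_inr : (d.mapDomain Sum.inr : Fin n ⊕ Fin p →₀ ℕ) ∘ Sum.inr = d :=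
      funext fun l => Finsupp.mapDomain_apply Sum.inr_injective d l
    rw [rename_monomial, rieszFunctional_monomial, hd_inl, hd_inr, hz.2.2 d (by omega), hγ]
    simp only [eval_monomial, Finsupp.prod_pow, integral_const_mul]
  | add r r' ih ih' =>
    filter_upwards [ih, ih'] with i hr hr' z hz
    simp only [map_add, hr z hz, hr' z hz, integral_add (hint r) (hint r')]

/-- The moments of a measure on `ℝ^n × ℝ^p`, doubly indexed like the variables of the relaxations,
in which they are feasible when the measure lives on the constraint set. -/
def momentSequence (ν : Measure (Fin n ⊕ Fin p → ℝ)) (α : Fin n → ℕ) (β : Fin p → ℕ) : ℝ :=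
  ∫ w, (∏ k, w (Sum.inl k) ^ α k) * ∏ l, w (Sum.inr l) ^ β l ∂ν

variable {ν : Measure (Fin n ⊕ Fin p → ℝ)}

theorem rieszFunctional_momentSequence
    (hint : ∀ q : MvPolynomial (Fin n ⊕ Fin p) ℝ, Integrable (fun w => eval w q) ν)
    (q : MvPolynomial (Fin n ⊕ Fin p) ℝ) :
    rieszFunctional (momentSequence ν) q = ∫ w, eval w q ∂ν := by
  induction q using MvPolynomial.induction_on' with
  | monomial d c =>
    simp only [rieszFunctional_monomial, eval_monomial, integral_const_mul, Finsupp.prod_pow,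
      Fintype.prod_sum_type, momentSequence, Function.comp_apply]
  | add q q' ih ih' => simp only [map_add, ih, ih', integral_add (hint q) (hint q')]

theorem relaxFeasible_momentSequence
    (hint : ∀ q : MvPolynomial (Fin n ⊕ Fin p) ℝ, Integrable (fun w => eval w q) ν)
    (hν : ν (basicClosedSet H)ᶜ = 0) (hmarg : ν.map (fun w => w ∘ Sum.inr) = φ)
    (hγ : ∀ β, γ β = ∫ y, ∏ l, y l ^ β l ∂φ) (i : ℕ) :
    RelaxFeasible n p H γ i (momentSequence ν) := by
  simp only [RelaxFeasible, ← rieszFunctional_apply, rieszFunctional_momentSequence hint]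
  have hK : ∀ᵐ w ∂ν, w ∈ basicClosedSet H := hν
  refine ⟨fun q _ => integral_nonneg fun w => ?_, fun j q _ => integral_nonneg_of_ae ?_,
    fun β _ => ?_⟩
  · exact (sq_nonneg (eval w q)).trans_eq (map_pow (eval w) q 2).symm
  · filter_upwards [hK] with w hw
    exact eval_nonneg_of_mem_generatedQuadraticModule hw
      (mul_sq_mem_generatedQuadraticModule H j q)
  · have hcont : Continuous fun y : Fin p → ℝ => ∏ l, y l ^ β l := by fun_prop
    have hπ : Measurable fun w : Fin n ⊕ Fin p → ℝ => w ∘ Sum.inr := by fun_prop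
    rw [hγ, ← hmarg, integral_map hπ.aemeasurable hcont.aestronglyMeasurable]
    simp [momentSequence]

theorem eventually_rhoSDP_le_integral [IsFiniteMeasure ν]
    (hu : IsOrderUnit (generatedQuadraticModule H) (1 : MvPolynomial (Fin n ⊕ Fin p) ℝ))
    (hν : ν (basicClosedSet H)ᶜ = 0) (hmarg : ν.map (fun w => w ∘ Sum.inr) = φ)
    (hγ : ∀ β, γ β = ∫ y, ∏ l, y l ^ β l ∂φ) :
    ∀ᶠ i in atTop, rhoSDP n p H γ f i ≤ ∫ w, eval w f ∂ν := by
  obtain ⟨k, hk⟩ := hu (-f)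
  have hint (q : MvPolynomial (Fin n ⊕ Fin p) ℝ) :=
    integrable_of_isCompact (isCompact_basicClosedSet hu) hν q.continuous_eval
  filter_upwards [eventually_forall_relaxFeasible_nonneg hk] with i hi
  exact csInf_le (bddBelow_relaxation_values hi) ⟨momentSequence ν,
    relaxFeasible_momentSequence hint hν hmarg hγ i,
    by rw [← rieszFunctional_apply, rieszFunctional_momentSequence hint]⟩

theorem ArchimedeanQM.isOrderUnit_one (h : ArchimedeanQM n p H) :
    IsOrderUnit (generatedQuadraticModule H) (1 : MvPolynomial (Fin n ⊕ Fin p) ℝ) := by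
  obtain ⟨N, σ₀, σ, hσ₀, hσ, heq⟩ := h
  have hQ := isQuadraticModule_generatedQuadraticModule H
  have hH (j : ι) : H j ∈ generatedQuadraticModule H := by
    simpa only [one_pow, mul_one] using mul_sq_mem_generatedQuadraticModule H j 1
  exact hQ.isOrderUnit_one_of_sub_sum_X_sq_mem (N := N) <| heq ▸ add_mem (hQ.sumSq_mem hσ₀)
    (sum_mem fun j _ => hQ.sumSq_mul_mem (hσ j) (hH j))

end Relaxation

section Selectors

variable {n p : ℕ} {ι : Type*} {H : ι → MvPolynomial (Fin n ⊕ Fin p) ℝ}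
  {f : MvPolynomial (Fin n ⊕ Fin p) ℝ}

/-- The fibre of the basic closed set of `H` over the parameter `y`, as a set of `x`. It is the
feasible set `K_y`, and empty when a constraint on `y` alone fails. -/
def fiberAt (H : ι → MvPolynomial (Fin n ⊕ Fin p) ℝ) (y : Fin p → ℝ) : Set (Fin n → ℝ) :=
  {x | Sum.elim x y ∈ basicClosedSet H}

theorem image_sumElim_fiberAt (y : Fin p → ℝ) :
    (fun x => Sum.elim x y) '' fiberAt H y = basicClosedSet H ∩ (fun w => w ∘ Sum.inr) ⁻¹' {y} := by
  ext w
  constructor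
  · rintro ⟨x, hx, rfl⟩
    exact ⟨hx, Sum.elim_comp_inr x y⟩
  · rintro ⟨hw, rfl⟩
    exact ⟨w ∘ Sum.inl, by rwa [fiberAt, mem_ofPred_eq, Sum.elim_comp_inl_inr],
      Sum.elim_comp_inl_inr w⟩

theorem fiberMinimizers_inr_eq_image (y : Fin p → ℝ) :
    fiberMinimizers H Sum.inr f y =
      (fun x => Sum.elim x y) '' argminOn (fun x => evalXY n p f (x, y)) (fiberAt H y) := by
  rw [fiberMinimizers, ← image_sumElim_fiberAt, argminOn_image]
  rfl

theorem exists_measurable_argminOn_fiberAt (hK : IsCompact (basicClosedSet H)) :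
    ∃ g : (Fin p → ℝ) → (Fin n → ℝ), Measurable g ∧ ∀ y, (fiberAt H y).Nonempty →
      g y ∈ argminOn (fun x => evalXY n p f (x, y)) (fiberAt H y) := by
  obtain ⟨s, hs, hmin⟩ := exists_measurable_argminOn_fiber hK
    (π := fun w : Fin n ⊕ Fin p → ℝ => w ∘ Sum.inr) (by fun_prop) f.continuous_eval
  refine ⟨fun y => s y ∘ Sum.inl, by fun_prop, fun y hy => ?_⟩
  have hsy : s y ∈ fiberMinimizers H Sum.inr f y :=
    hmin y (image_sumElim_fiberAt (H := H) y ▸ hy.image _)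
  rw [fiberMinimizers_inr_eq_image] at hsy
  obtain ⟨x, hx, hxs⟩ := hsy
  simpa only [← hxs, Sum.elim_comp_inl] using hx

variable [Fintype ι] {γ : (Fin p → ℕ) → ℝ} {φ : Measure (Fin p → ℝ)} [IsFiniteMeasure φ]

theorem tendsto_rieszFunctional_of_le_rhoSDP_add
    (hu : IsOrderUnit (generatedQuadraticModule H) (1 : MvPolynomial (Fin n ⊕ Fin p) ℝ))
    {g : (Fin p → ℝ) → (Fin n → ℝ)} (hg : Measurable g)
    (hmin : ∀ᵐ y ∂φ, g y ∈ argminOn (fun x => evalXY n p f (x, y)) (fiberAt H y))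
    (huniq : ∀ᵐ y ∂φ, (argminOn (fun x => evalXY n p f (x, y)) (fiberAt H y)).Subsingleton)
    (hγ : ∀ β, γ β = ∫ y, ∏ l, y l ^ β l ∂φ) {ε : ℕ → ℝ} (hε : Tendsto ε atTop (𝓝 0))
    {z : ℕ → (Fin n → ℕ) → (Fin p → ℕ) → ℝ}
    (hz : ∀ᶠ i in atTop, RelaxFeasible n p H γ i (z i) ∧
      Lz n p (z i) f ≤ rhoSDP n p H γ f i + ε i) (q : MvPolynomial (Fin n ⊕ Fin p) ℝ) :
    Tendsto (fun i => rieszFunctional (z i) q) atTop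
      (𝓝 (∫ y, eval (Sum.elim (g y) y) q ∂φ)) := by
  let s (y : Fin p → ℝ) : Fin n ⊕ Fin p → ℝ := Sum.elim (g y) y
  have hs : Measurable s := by
    refine measurable_pi_lambda _ fun i => ?_
    cases i <;> simp only [s, Sum.elim_inl, Sum.elim_inr] <;> fun_prop
  have hsmin : ∀ᵐ y ∂φ, s y ∈ fiberMinimizers H Sum.inr f y := by
    filter_upwards [hmin] with y hy
    rw [fiberMinimizers_inr_eq_image]
    exact mem_image_of_mem _ hy
  have hsuniq : ∀ᵐ y ∂φ, (fiberMinimizers H Sum.inr f y).Subsingleton := by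
    filter_upwards [huniq] with y hy
    rw [fiberMinimizers_inr_eq_image]
    exact hy.image _
  have hK := isCompact_basicClosedSet hu
  have hν : φ.map s (basicClosedSet H)ᶜ = 0 :=
    (ae_map_iff hs.aemeasurable hK.measurableSet).2 (hsmin.mono fun y hy => hy.1.1)
  have hmarg : (φ.map s).map (fun w => w ∘ Sum.inr) = φ := by
    rw [Measure.map_map (by fun_prop) hs]
    exact Measure.map_id
  have hint (r : MvPolynomial (Fin p) ℝ) : Integrable (fun y => eval y r) φ := by
    simpa only [eval_rename, s, Function.comp_def, Sum.elim_inr] using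
      (integrable_of_isCompact hK hν (rename Sum.inr r).continuous_eval).comp_measurable hs
  rw [← integral_map hs.aemeasurable q.continuous_eval.aestronglyMeasurable]
  refine tendsto_integral_map_selection hu hs hsmin hsuniq (fun a ha => ?_) (fun r => ?_) hε ?_ q
  · filter_upwards [hz, eventually_forall_relaxFeasible_nonneg ha] with i hi ha using ha _ hi.1
  · refine tendsto_const_nhds.congr' ?_
    filter_upwards [hz, eventually_forall_relaxFeasible_rename_inr (H := H) hint hγ r] with i hi hr
    exact (hr _ hi.1).symm
  · filter_upwards [hz, eventually_rhoSDP_le_integral (f := f) hu hν hmarg hγ] with i hi hρ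
    rw [rieszFunctional_apply]
    exact hi.2.trans (by gcongr)

end Selectors

theorem stmt12_general (n p : ℕ) {ι : Type*} [Fintype ι] (f : MvPolynomial (Fin n ⊕ Fin p) ℝ)
    (H : ι → MvPolynomial (Fin n ⊕ Fin p) ℝ) (harch : ArchimedeanQM n p H)
    (Y : Set (Fin p → ℝ)) (hne : ∀ y ∈ Y, (fiberAt H y).Nonempty)
    (φ : Measure (Fin p → ℝ)) [IsFiniteMeasure φ] (hφY : φ Yᶜ = 0)
    (γ : (Fin p → ℕ) → ℝ) (hγ : ∀ β, γ β = ∫ y in Y, ∏ l, y l ^ β l ∂φ)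
    (J : (Fin p → ℝ) → ℝ)
    (hJ : ∀ y ∈ Y, J y = sInf ((fun x => evalXY n p f (x, y)) '' fiberAt H y))
    (huniq : ∀ᵐ y ∂φ, {x ∈ fiberAt H y | evalXY n p f (x, y) = J y}.Subsingleton)
    (ε : ℕ → ℝ) (hε : Tendsto ε atTop (𝓝 0)) (z : ℕ → (Fin n → ℕ) → (Fin p → ℕ) → ℝ)
    (hz : ∀ᶠ i in atTop, RelaxFeasible n p H γ i (z i) ∧
      Lz n p (z i) f ≤ rhoSDP n p H γ f i + ε i) :
    ∃ g : (Fin p → ℝ) → (Fin n → ℝ), Measurable g ∧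
      (∀ y ∈ Y, g y ∈ fiberAt H y ∧ J y = evalXY n p f (g y, y)) ∧
      ∀ α β, Tendsto (fun i => z i α β) atTop
        (𝓝 (∫ y in Y, (∏ l, y l ^ β l) * ∏ k, g y k ^ α k ∂φ)) := by
  have hY : ∀ᵐ y ∂φ, y ∈ Y := hφY
  rw [Measure.restrict_eq_self_of_ae_mem hY] at hγ ⊢
  have hu := harch.isOrderUnit_one
  obtain ⟨g, hg, hmin⟩ := exists_measurable_argminOn_fiberAt (f := f) (isCompact_basicClosedSet hu)
  have hsub : ∀ᵐ y ∂φ, (argminOn (fun x => evalXY n p f (x, y)) (fiberAt H y)).Subsingleton := by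
    filter_upwards [hY, huniq] with y hy hsub
    exact hsub.anti fun x hx => ⟨hx.1, (sInf_image_eq_of_mem_argminOn hx).symm.trans (hJ y hy).symm⟩
  have hgmin (y) (hy : y ∈ Y) := hmin y (hne y hy)
  refine ⟨g, hg, fun y hy => ⟨(hgmin y hy).1,
    (hJ y hy).trans (sInf_image_eq_of_mem_argminOn (hgmin y hy))⟩, fun α β => ?_⟩
  have hlim := tendsto_rieszFunctional_of_le_rhoSDP_add hu hg (hY.mono hgmin) hsub hγ hε hz
    (monomial (Finsupp.equivFunOnFinite.symm (Sum.elim α β)) 1)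
  simpa [rieszFunctional_monomial, eval_monomial, Finsupp.prod_pow, Function.comp_def, mul_comm]
    using hlim

/-- convergence of the moments of nearly optimal solutions of the SDP
relaxations to the moments of `y ↦ (g(y), y)` for a measurable selector `g` of optimal
solutions. -/
theorem stmt12 (n p m s : ℕ)
    (f : MvPolynomial (Fin n ⊕ Fin p) ℝ)
    (hx : Fin m → MvPolynomial (Fin n ⊕ Fin p) ℝ)
    (hy : Fin s → MvPolynomial (Fin p) ℝ)
    (H : Fin m ⊕ Fin s → MvPolynomial (Fin n ⊕ Fin p) ℝ)
    (hH : H = Sum.elim hx (fun k => rename Sum.inr (hy k)))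
    (Y : Set (Fin p → ℝ)) (hYdef : Y = {y | ∀ k, 0 ≤ eval y (hy k)}) (hYc : IsCompact Y)
    (K : Set ((Fin n → ℝ) × (Fin p → ℝ)))
    (hKdef : K = {w | w.2 ∈ Y ∧ ∀ j, 0 ≤ evalXY n p (hx j) w}) (hKc : IsCompact K)
    (Ky : (Fin p → ℝ) → Set (Fin n → ℝ))
    (hKy : ∀ y, Ky y = {x | ∀ j, 0 ≤ eval (Sum.elim x y) (hx j)})
    (hne : ∀ y ∈ Y, (Ky y).Nonempty)
    (harch : ArchimedeanQM n p H)
    (φ : Measure (Fin p → ℝ)) [IsProbabilityMeasure φ] (hφY : φ Yᶜ = 0)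
    (γ : (Fin p → ℕ) → ℝ)
    (hγ : ∀ β, γ β = ∫ y in Y, ∏ l, y l ^ β l ∂φ)
    (J : (Fin p → ℝ) → ℝ)
    (hJ : ∀ y, J y = sInf ((fun x => evalXY n p f (x, y)) '' Ky y))
    (Xstar : (Fin p → ℝ) → Set (Fin n → ℝ))
    (hXs : ∀ y, Xstar y = {x ∈ Ky y | evalXY n p f (x, y) = J y})
    (xstar : (Fin p → ℝ) → (Fin n → ℝ))
    (hxu : ∀ᵐ y ∂φ, Xstar y = {xstar y})
    (zi : ℕ → (Fin n → ℕ) → (Fin p → ℕ) → ℝ)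
    (hzi : ∀ i, iZero n p H f ≤ i →
      RelaxFeasible n p H γ i (zi i) ∧
      Lz n p (zi i) f ≤ rhoSDP n p H γ f i + 1 / (i : ℝ)) :
    ∃ g : (Fin p → ℝ) → (Fin n → ℝ),
      Measurable (fun y : Y => g y.1) ∧
      (∀ y ∈ Y, g y ∈ Ky y ∧ J y = evalXY n p f (g y, y)) ∧
      (∀ (α : Fin n → ℕ) (β : Fin p → ℕ),
        Tendsto (fun i => zi i α β) atTop
          (𝓝 (∫ y in Y, (∏ l, y l ^ β l) * ∏ k, g y k ^ α k ∂φ))) ∧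
      (∀ (k : Fin n) (β : Fin p → ℕ),
        Tendsto (fun i => zi i (fun j => if j = k then 1 else 0) β) atTop
          (𝓝 (∫ y in Y, (∏ l, y l ^ β l) * g y k ∂φ))) := by
  have hfib (y) (hy : y ∈ Y) : fiberAt H y = Ky y := by
    subst hYdef hH
    ext x
    simpa [hKy, fiberAt, basicClosedSet, eval_rename, Sum.elim_comp_inr] using fun _ => hy
  obtain ⟨g, hg, hgK, hlim⟩ := stmt12_general n p f H harch Y (fun y hy => hfib y hy ▸ hne y hy)
    φ hφY γ hγ J (fun y hy => (hJ y).trans (by rw [hfib y hy]))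
    (by
      filter_upwards [hxu, show ∀ᵐ y ∂φ, y ∈ Y from hφY] with y hxy hy
      rw [hfib y hy, ← hXs, hxy]
      exact subsingleton_singleton)
    _ tendsto_one_div_atTop_nhds_zero_nat zi (eventually_atTop.2 ⟨_, hzi⟩)
  refine ⟨g, hg.comp measurable_subtype_coe, fun y hy => hfib y hy ▸ hgK y hy, hlim, fun k β => ?_⟩
  simpa using hlim (fun j => if j = k then 1 else 0) β
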